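/- Let (V^α)_{α∈ℚ} be a V-filtration on M and set M' := ∑_{m≥0} D^m(V^{>0}) ⊆ M (the k-subspace spanned by all elements D^m(u) with m ≥ 0 and u ∈ V^{>0}). Then: (a) for every u ∈ M there is an integer m ≥ 0 with T^m(u) ∈ M' (that is, every element of M/M' is annihilated by a power of T); and (b) V^{>0} + (V^0 ∩ M') = V^{>0} + D(V^1) as k-subspaces of M. -/

import Mathlib

open Module

section VFiltration

variable {k : Type*} [Field k] [CharZero k]
variable {M : Type*} [AddCommGroup M] [Module k M]

/-- The subalgebra `A0 ⊆ End_k(M)` generated by `T`, `S = -(D∘T)` and the set `C`. -/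
def VFilt.A0 (T D : Module.End k M) (C : Set (Module.End k M)) :
    Subalgebra k (Module.End k M) :=
  Algebra.adjoin k ({T, -(D * T)} ∪ C)

/-- `V^{>α} = ⋃_{β > α} V^β`. -/
def VFilt.gt (V : ℚ → Submodule k M) (α : ℚ) : Submodule k M := ⨆ β > α, V β

/-- A weak `V`-filtration on `M` with respect to the data `T`, `D`, `C`. -/
structure IsWeakVFiltration (T D : Module.End k M) (C : Set (Module.End k M))
    (V : ℚ → Submodule k M) : Prop where
  /-- decreasing -/
  antitone : Antitone V
  /-- exhaustive -/
  exhaustive : ∀ m : M, ∃ α : ℚ, m ∈ V α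
  /-- discrete and left-continuous -/
  discrete : ∃ ℓ : ℕ, 0 < ℓ ∧ ∀ (i : ℤ) (α β : ℚ),
    α ∈ Set.Ioc ((i : ℚ) / ℓ) ((i + 1 : ℚ) / ℓ) →
    β ∈ Set.Ioc ((i : ℚ) / ℓ) ((i + 1 : ℚ) / ℓ) → V α = V β
  /-- each `V^α` is stable under every element of `A0` -/
  stable : ∀ a ∈ VFilt.A0 T D C, ∀ α : ℚ, (V α).map a ≤ V α
  /-- `T(V^α) ⊆ V^{α+1}` -/
  mapT_le : ∀ α : ℚ, (V α).map T ≤ V (α + 1)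
  /-- `D(V^α) ⊆ V^{α-1}` -/
  mapD_le : ∀ α : ℚ, (V α).map D ≤ V (α - 1)
  /-- `(S + α·id)^N (V^α) ⊆ V^{>α}` for some `N ≥ 1` -/
  nilpotent : ∀ α : ℚ, ∃ N : ℕ, 1 ≤ N ∧ ∀ u ∈ V α,
    ((-(D * T) + (α : k) • (1 : Module.End k M)) ^ N) u ∈ VFilt.gt V α

/-- A `V`-filtration on `M`: a weak `V`-filtration such that each `V^α` is a finitely
generated `A0`-module and `T(V^α) = V^{α+1}` for `α > 0`. -/
structure IsVFiltration (T D : Module.End k M) (C : Set (Module.End k M))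
    (V : ℚ → Submodule k M) extends IsWeakVFiltration T D C V : Prop where
  /-- each `V^α` is a finitely generated `A0`-module: it is the smallest `A0`-stable
  `k`-subspace containing some finite set -/
  fg : ∀ α : ℚ, ∃ F : Finset M, (↑F : Set M) ⊆ (V α : Set M) ∧
    ∀ W : Submodule k M, (∀ a ∈ VFilt.A0 T D C, W.map a ≤ W) →
      (↑F : Set M) ⊆ (W : Set M) → V α ≤ W
  /-- `T(V^α) = V^{α+1}` for `α > 0` -/
  mapT_eq : ∀ α : ℚ, 0 < α → (V α).map T = V (α + 1)

end VFiltration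

/-!
The operator `S + β` is nilpotent on `gr^β V`, while on the kernel of
`D : gr^β V → gr^{β-1} V` it equals `β - 1`, because `S = -1 - T D`. Hence `gr^β D` is injective
for `β ≠ 1`, and climbing up the filtration shows that `D⁻¹(V^α) = V^{α+1}` for `α ≤ 0`. As
`M' := ∑ D^m(V^{>α})` satisfies `M' = V^{>α} + D(M')`, the modular law gives
`V^α ∩ M' = V^{>α} + (V^α ∩ D(M')) = V^{>α} + D(V^{α+1} ∩ M')`, and `V^{α+1} ⊆ V^{>α} ⊆ M'`.
-/

theorem mem_of_pow_apply_mem {R M : Type*} [Ring R] [AddCommGroup M] [Module R M]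
    {f : End R M} {W : Submodule R M} (hW : W.map f ≤ W) {c : R} (hc : IsUnit c) {v : M}
    (hv : f v - c • v ∈ W) {n : ℕ} (hn : (f ^ n) v ∈ W) : v ∈ W := by
  induction n with
  | zero => simpa only [pow_zero, End.one_apply] using hn
  | succ n ih =>
    have hpow : W ≤ W.comap (f ^ n) :=
      W.le_comap_pow_of_le_comap (Submodule.map_le_iff_le_comap.mp hW) n
    have hdiff : (f ^ (n + 1)) v - c • (f ^ n) v ∈ W := by
      simpa only [Submodule.mem_comap, pow_succ, End.mul_apply, map_sub, map_smul] using hpow hv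
    have hsmul : c • (f ^ n) v ∈ W := (W.sub_mem_iff_right hn).mp hdiff
    exact ih ((W.smul_mem_iff_of_isUnit hc).mp hsmul)

theorem iSup_map_pow_eq_sup_map {R M : Type*} [Semiring R] [AddCommMonoid M] [Module R M]
    (f : End R M) (W : Submodule R M) :
    ⨆ m : ℕ, W.map (f ^ m) = W ⊔ (⨆ m : ℕ, W.map (f ^ m)).map f := by
  simp only [Submodule.map_iSup, ← Submodule.map_comp, ← End.mul_eq_comp, ← pow_succ']
  rw [← sup_iSup_nat_succ, pow_zero, End.one_eq_id, Submodule.map_id]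

section Filtration

variable {k : Type*} [Field k]
variable {M : Type*} [AddCommGroup M] [Module k M]

namespace VFilt

variable {V : ℚ → Submodule k M} {α β : ℚ}

theorem le_gt (h : α < β) : V β ≤ gt V α :=
  le_iSup₂_of_le β h le_rfl

theorem gt_le (hV : Antitone V) : gt V α ≤ V α :=
  iSup₂_le fun _ hβ => hV hβ.le

theorem map_gt_le {f : End k M} {r : ℚ} (hf : ∀ β, (V β).map f ≤ V (β + r)) :
    (gt V α).map f ≤ gt V (α + r) := by
  simp only [gt, Submodule.map_iSup]
  exact iSup₂_le fun β hβ => (hf β).trans (le_gt (by gcongr))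

end VFilt

namespace IsWeakVFiltration

open VFilt

variable {T D : End k M} {C : Set (End k M)} {V : ℚ → Submodule k M}

theorem mapT_pow_le (hV : IsWeakVFiltration T D C V) (α : ℚ) (n : ℕ) :
    (V α).map (T ^ n) ≤ V (α + n) := by
  induction n with
  | zero => simp only [pow_zero, End.one_eq_id, Submodule.map_id, Nat.cast_zero, add_zero, le_refl]
  | succ n ih =>
    rw [pow_succ', End.mul_eq_comp, Submodule.map_comp, Nat.cast_succ, ← add_assoc]
    exact (Submodule.map_mono ih).trans (hV.mapT_le _)

theorem exists_T_pow_mem_gt (hV : IsWeakVFiltration T D C V) (α : ℚ) (u : M) :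
    ∃ m : ℕ, (T ^ m) u ∈ gt V α := by
  obtain ⟨β, hβ⟩ := hV.exhaustive u
  obtain ⟨m, hm⟩ := exists_nat_gt (α - β)
  exact ⟨m, le_gt (sub_lt_iff_lt_add'.mp hm) (hV.mapT_pow_le β m (Submodule.mem_map_of_mem hβ))⟩

theorem exists_gt_int_div_eq (hV : IsWeakVFiltration T D C V) :
    ∃ ℓ : ℕ, 0 < ℓ ∧ ∀ i : ℤ, gt V (i / ℓ) = V ((i + 1) / ℓ) := by
  obtain ⟨ℓ, hℓ, hconst⟩ := hV.discrete
  refine ⟨ℓ, hℓ, fun i => ?_⟩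
  have hlt : (i : ℚ) / ℓ < (i + 1) / ℓ := by
    gcongr
    exact lt_add_one _
  refine le_antisymm (iSup₂_le fun β hβ => ?_) (le_gt hlt)
  rcases le_total β ((i + 1) / ℓ) with h | h
  · exact (hconst i β _ ⟨hβ, h⟩ ⟨hlt, le_rfl⟩).le
  · exact hV.antitone h

theorem mem_of_forall_mem_gt (hV : IsWeakVFiltration T D C V) {γ : ℚ} {v : M}
    (h : ∀ β < γ, v ∈ V β → v ∈ gt V β) : v ∈ V γ := by
  obtain ⟨ℓ, hℓ, hgt⟩ := hV.exists_gt_int_div_eq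
  have hℓ' : (0 : ℚ) < ℓ := by exact_mod_cast hℓ
  by_contra hvγ
  have hlt (i : ℤ) (hi : v ∈ V (i / ℓ)) : (i : ℚ) / ℓ < γ :=
    lt_of_not_ge fun hγ => hvγ (hV.antitone hγ hi)
  have hbdd : ∃ b : ℤ, ∀ i : ℤ, v ∈ V (i / ℓ) → i ≤ b :=
    ⟨⌊γ * ℓ⌋, fun i hi => Int.le_floor.mpr ((div_lt_iff₀ hℓ').mp (hlt i hi)).le⟩
  have hne : ∃ i : ℤ, v ∈ V (i / ℓ) := by
    obtain ⟨α, hα⟩ := hV.exhaustive v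
    exact ⟨⌊α * ℓ⌋, hV.antitone ((div_le_iff₀ hℓ').mpr (Int.floor_le _)) hα⟩
  obtain ⟨i, hi, hmax⟩ := Int.exists_greatest_of_bdd hbdd hne
  have hsucc : v ∈ V ((i + 1 : ℤ) / ℓ) := by
    rw [Int.cast_add, Int.cast_one, ← hgt]
    exact h _ (hlt i hi) hi
  exact (lt_add_one i).not_ge (hmax _ hsucc)

variable [CharZero k]

theorem mem_gt_of_D_mem_gt (hV : IsWeakVFiltration T D C V) (hweyl : D * T - T * D = 1)
    {β : ℚ} (hβ : β ≠ 1) {v : M} (hv : v ∈ V β) (hDv : D v ∈ gt V (β - 1)) : v ∈ gt V β := by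
  obtain ⟨N, -, hN⟩ := hV.nilpotent β
  set f : End k M := -(D * T) + (β : k) • 1
  have hf : f ∈ A0 T D C :=
    add_mem (Algebra.subset_adjoin (by simp)) (Subalgebra.smul_mem _ (one_mem _) _)
  have hstable : (gt V β).map f ≤ gt V β := by
    simpa only [add_zero] using map_gt_le (r := 0) fun γ => by
      simpa only [add_zero] using hV.stable f hf γ
  have hTD : T (D v) ∈ gt V β := by
    simpa only [sub_add_cancel] using map_gt_le hV.mapT_le (Submodule.mem_map_of_mem hDv)
  have hfv : f v - ((β : k) - 1) • v = -T (D v) := by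
    have hDT : T * D = D * T - 1 := by rw [← hweyl, sub_sub_cancel]
    have hend : f - ((β : k) - 1) • 1 = -(T * D) := by
      simp only [f, hDT, sub_smul, one_smul]
      abel
    exact LinearMap.congr_fun hend v
  have hne : (β : k) - 1 ≠ 0 := sub_ne_zero.mpr (by exact_mod_cast hβ)
  exact mem_of_pow_apply_mem hstable hne.isUnit (hfv ▸ neg_mem hTD) (hN v hv)

theorem comap_D_eq (hV : IsWeakVFiltration T D C V) (hweyl : D * T - T * D = 1)
    {α : ℚ} (hα : α ≤ 0) : (V α).comap D = V (α + 1) := by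
  refine le_antisymm (fun v hDv => hV.mem_of_forall_mem_gt fun β hβ hv => ?_) ?_
  · exact hV.mem_gt_of_D_mem_gt hweyl (by linarith) hv (le_gt (by linarith) hDv)
  · simpa only [add_sub_cancel_right] using Submodule.map_le_iff_le_comap.mp (hV.mapD_le (α + 1))

theorem inf_iSup_map_D_pow_gt (hV : IsWeakVFiltration T D C V) (hweyl : D * T - T * D = 1)
    {α : ℚ} (hα : α ≤ 0) :
    V α ⊓ ⨆ m : ℕ, (gt V α).map (D ^ m) = gt V α ⊔ (V (α + 1)).map D := by
  set M' := ⨆ m : ℕ, (gt V α).map (D ^ m)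
  have hM' : M' = gt V α ⊔ M'.map D := iSup_map_pow_eq_sup_map D (gt V α)
  have hle : V (α + 1) ≤ M' := (le_gt (lt_add_one α)).trans (hM' ▸ le_sup_left)
  calc V α ⊓ M'
      = V α ⊓ (gt V α ⊔ M'.map D) := congrArg _ hM'
    _ = gt V α ⊔ (V α ⊓ M'.map D) := by
      rw [inf_comm, sup_inf_assoc_of_le _ (gt_le hV.antitone), inf_comm]
    _ = gt V α ⊔ (M' ⊓ (V α).comap D).map D := by
      rw [inf_comm, Submodule.map_inf_eq_map_inf_comap]
    _ = gt V α ⊔ (V (α + 1)).map D := by rw [hV.comap_D_eq hweyl hα, inf_eq_right.mpr hle]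

end IsWeakVFiltration

end Filtration

theorem stmt11_general {k : Type*} [Field k] [CharZero k]
    {M : Type*} [AddCommGroup M] [Module k M]
    (T D : Module.End k M) (C : Set (Module.End k M))
    (hweyl : D * T - T * D = 1)
    (V : ℚ → Submodule k M) (hV : IsWeakVFiltration T D C V) {α : ℚ} (hα : α ≤ 0)
    (M' : Submodule k M) (hM' : M' = ⨆ m : ℕ, (VFilt.gt V α).map (D ^ m)) :
    (∀ u : M, ∃ m : ℕ, (T ^ m) u ∈ M') ∧
    (VFilt.gt V α ⊔ (V α ⊓ M') = VFilt.gt V α ⊔ (V (α + 1)).map D) := by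
  have hgt : VFilt.gt V α ≤ M' := by
    rw [hM', iSup_map_pow_eq_sup_map]
    exact le_sup_left
  refine ⟨fun u => (hV.exists_T_pow_mem_gt α u).imp fun m hm => hgt hm, ?_⟩
  rw [hM', hV.inf_iSup_map_D_pow_gt hweyl hα, sup_left_idem]

/-- **Proposition 3.12 (computational content).** With `M' = ∑_{m ≥ 0} D^m(V^{>0})`:
(a) every element of `M/M'` is annihilated by a power of `T`;
(b) `V^{>0} + (V^0 ∩ M') = V^{>0} + D(V^1)`. -/
theorem stmt11 {k : Type*} [Field k] [CharZero k]
    {M : Type*} [AddCommGroup M] [Module k M]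
    (T D : Module.End k M) (C : Set (Module.End k M))
    (hweyl : D * T - T * D = 1)
    (hC : ∀ c ∈ C, Commute c T ∧ Commute c D)
    (V : ℚ → Submodule k M) (hV : IsVFiltration T D C V)
    (M' : Submodule k M) (hM' : M' = ⨆ m : ℕ, (VFilt.gt V 0).map (D ^ m)) :
    (∀ u : M, ∃ m : ℕ, (T ^ m) u ∈ M') ∧
    (VFilt.gt V 0 ⊔ (V 0 ⊓ M') = VFilt.gt V 0 ⊔ (V 1).map D) := by
  simpa only [zero_add] using
    stmt11_general T D C hweyl V hV.toIsWeakVFiltration le_rfl M' hM'
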